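/- Let H be a 3-regular, triangle-free finite simple graph containing no copy of K_{2,3}, and suppose H contains a 4-cycle with vertices w, x, y, z (in this cyclic order). If H − {w,x,y,z} admits an injective edge-coloring with 7 colors, then H admits an injective edge-coloring with 7 colors. -/

import Mathlib

open SimpleGraph

/-- Two distinct edges of `G` *conflict* if they are at distance exactly 1 in `G`
(they share no endpoint but some endpoint of one is adjacent to some endpoint of the
other), or they lie in a common triangle of `G`. -/
def EdgeConflict {V : Type*} (G : SimpleGraph V) (e₁ e₂ : Sym2 V) : Prop :=
  e₁ ≠ e₂ ∧
    (((∀ u ∈ e₁, u ∉ e₂) ∧ ∃ u ∈ e₁, ∃ v ∈ e₂, G.Adj u v) ∨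
      (∃ a b c : V, G.Adj a b ∧ G.Adj b c ∧ G.Adj a c ∧
        e₁ ∈ ({s(a, b), s(b, c), s(a, c)} : Set (Sym2 V)) ∧
        e₂ ∈ ({s(a, b), s(b, c), s(a, c)} : Set (Sym2 V))))

/-- An injective edge-coloring of `G` with `k` colors. -/
def IsInjEdgeColoring {V : Type*} (G : SimpleGraph V) {k : ℕ} (f : Sym2 V → Fin k) : Prop :=
  ∀ e₁ ∈ G.edgeSet, ∀ e₂ ∈ G.edgeSet, EdgeConflict G e₁ e₂ → f e₁ ≠ f e₂

/-- The injective chromatic index of `G`. -/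
noncomputable def injChromIndex {V : Type*} (G : SimpleGraph V) : ℕ :=
  sInf {k : ℕ | ∃ f : Sym2 V → Fin k, IsInjEdgeColoring G f}

/-!
At most eight edges meet the 4-cycle: its four edges and one pendant edge at each vertex. Each of
them conflicts with at most four of the edges colored already, so at least three of the seven colors
remain available to it.

Among themselves these edges always conflict in the same way, with one exception: the pendant edges
at opposite vertices conflict only if their outer endpoints are adjacent. In that case each of these
two edges conflicts with at most three of the edges colored already, which leaves it a fourth color.
The eight edges are then colored from their lists by the Alon–Tarsi method: in each of the four
cases the polynomial `∏ (X i - X j)` over the conflicting pairs has a nonzero coefficient at a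
monomial whose exponents are smaller than the lists, so by the Combinatorial Nullstellensatz it does
not vanish everywhere on the product of the lists.
-/

section Conflict

variable {V W : Type*} {G : SimpleGraph V} {k : ℕ}

lemma EdgeConflict.symm {e₁ e₂ : Sym2 V} (h : EdgeConflict G e₁ e₂) : EdgeConflict G e₂ e₁ := by
  obtain ⟨hne, ⟨hdisj, u, hu, v, hv, huv⟩ | ⟨a, b, c, hab, hbc, hac, h₁, h₂⟩⟩ := h
  · exact ⟨hne.symm, .inl ⟨fun x hx hx' ↦ hdisj x hx' hx, v, hv, u, hu, huv.symm⟩⟩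
  · exact ⟨hne.symm, .inr ⟨a, b, c, hab, hbc, hac, h₂, h₁⟩⟩

-- The walk `a, b, c, d` is closed, that is `a = d`, when the two edges lie in a triangle.
lemma edgeConflict_iff_exists_walk {e₁ e₂ : Sym2 V} (h₁ : e₁ ∈ G.edgeSet) (h₂ : e₂ ∈ G.edgeSet) :
    EdgeConflict G e₁ e₂ ↔
      ∃ a b c d, e₁ = s(a, b) ∧ e₂ = s(c, d) ∧ G.Adj b c ∧ a ≠ c ∧ b ≠ d := by
  constructor
  · rintro ⟨hne, ⟨hdisj, b, hb, c, hc, hbc⟩ | ⟨p, q, r, hpq, hqr, hpr, hp, hq⟩⟩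
    · obtain ⟨a, rfl⟩ := Sym2.mem_iff_exists.1 hb
      obtain ⟨d, rfl⟩ := Sym2.mem_iff_exists.1 hc
      refine ⟨a, b, c, d, Sym2.eq_swap, rfl, hbc, ?_, ?_⟩
      · rintro rfl
        exact hdisj a (Sym2.mem_mk_right _ _) (Sym2.mem_mk_left _ _)
      · rintro rfl
        exact hdisj b (Sym2.mem_mk_left _ _) (Sym2.mem_mk_right _ _)
    · have share : ∀ {x y z}, e₁ = s(x, y) → e₂ = s(x, z) → G.Adj x y → G.Adj y z → G.Adj x z →
          ∃ a b c d, e₁ = s(a, b) ∧ e₂ = s(c, d) ∧ G.Adj b c ∧ a ≠ c ∧ b ≠ d :=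
        fun {x y z} hx hy hxy hyz hxz ↦
          ⟨x, y, z, x, hx, hy.trans Sym2.eq_swap, hyz, hxz.ne, hxy.ne'⟩
      simp only [Set.mem_insert_iff, Set.mem_singleton_iff] at hp hq
      grind [SimpleGraph.Adj.symm, Sym2.eq_swap]
  · rintro ⟨a, b, c, d, rfl, rfl, hbc, hac, hbd⟩
    rw [mem_edgeSet] at h₁ h₂
    have hne : s(a, b) ≠ s(c, d) := by
      rw [Ne, Sym2.eq_iff]
      rintro (⟨h, -⟩ | ⟨-, h⟩)
      exacts [hac h, hbc.ne h]
    refine ⟨hne, ?_⟩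
    by_cases had : a = d
    · subst had
      exact .inr ⟨a, b, c, h₁, hbc, h₂.symm, by simp, by simp [Sym2.eq_swap]⟩
    · refine .inl ⟨?_, b, Sym2.mem_mk_right _ _, c, Sym2.mem_mk_left _ _, hbc⟩
      simp [Sym2.mem_iff, hac, had, hbc.ne, hbd]

lemma IsInjEdgeColoring.exists_map [NeZero k] {f : Sym2 V → Fin k} (hf : IsInjEdgeColoring G f)
    (φ : V ↪ W) : ∃ g : Sym2 W → Fin k, IsInjEdgeColoring (G.map φ) g := by
  refine ⟨Function.extend (Sym2.map φ) f 0, fun e₁ h₁ e₂ h₂ h ↦ ?_⟩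
  obtain ⟨a, b, c, d, rfl, rfl, hbc, hac, hbd⟩ := (edgeConflict_iff_exists_walk h₁ h₂).1 h
  obtain ⟨a, b, hab, rfl, rfl⟩ := (map_adj ..).1 ((mem_edgeSet _).1 h₁)
  obtain ⟨c, d, hcd, rfl, rfl⟩ := (map_adj ..).1 ((mem_edgeSet _).1 h₂)
  have hbc : G.Adj b c := (map_adj_apply ..).1 hbc
  simp only [← Sym2.map_mk, (Sym2.map.injective φ.injective).extend_apply]
  exact hf _ hab _ hcd <| (edgeConflict_iff_exists_walk hab hcd).2
    ⟨a, b, c, d, rfl, rfl, hbc, ne_of_apply_ne φ hac, ne_of_apply_ne φ hbd⟩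

lemma exists_isInjEdgeColoring_of_classes {ι : Type*} (E : ι → Set (Sym2 V)) (c : ι → Fin k)
    (g : Sym2 V → Fin k)
    (hclass : ∀ i j, ∀ e₁ ∈ G.edgeSet ∩ E i, ∀ e₂ ∈ G.edgeSet ∩ E j,
      EdgeConflict G e₁ e₂ → c i ≠ c j)
    (hmixed : ∀ i, ∀ e₁ ∈ G.edgeSet ∩ E i, ∀ e₂ ∈ G.edgeSet \ ⋃ j, E j,
      EdgeConflict G e₁ e₂ → c i ≠ g e₂)
    (hrest : ∀ e₁ ∈ G.edgeSet \ ⋃ i, E i, ∀ e₂ ∈ G.edgeSet \ ⋃ i, E i,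
      EdgeConflict G e₁ e₂ → g e₁ ≠ g e₂) :
    ∃ f : Sym2 V → Fin k, IsInjEdgeColoring G f := by
  classical
  have hf : ∀ e, ∃ x, (∃ i, e ∈ E i ∧ x = c i) ∨ (e ∉ ⋃ i, E i) ∧ x = g e := by
    intro e
    by_cases he : e ∈ ⋃ i, E i
    · obtain ⟨i, hi⟩ := Set.mem_iUnion.1 he
      exact ⟨c i, .inl ⟨i, hi, rfl⟩⟩
    · exact ⟨g e, .inr ⟨he, rfl⟩⟩
  choose f hf using hf
  refine ⟨f, fun e₁ h₁ e₂ h₂ h ↦ ?_⟩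
  obtain ⟨i, hi, hfi⟩ | ⟨hi, hfi⟩ := hf e₁ <;> obtain ⟨j, hj, hfj⟩ | ⟨hj, hfj⟩ := hf e₂ <;>
    rw [hfi, hfj]
  · exact hclass i j e₁ ⟨h₁, hi⟩ e₂ ⟨h₂, hj⟩ h
  · exact hmixed i e₁ ⟨h₁, hi⟩ e₂ ⟨h₂, hj⟩ h
  · exact (hmixed j e₂ ⟨h₂, hj⟩ e₁ ⟨h₁, hi⟩ h.symm).symm
  · exact hrest e₁ ⟨h₁, hi⟩ e₂ ⟨h₂, hj⟩ h

end Conflict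

section AlonTarsi

variable {ι : Type*}

/-- The graph polynomial `∏ (X i - X j)` over the pairs `(i, j)` of `L`, which list the edges of a
graph on `ι` in the Alon–Tarsi method, each in one of its two orientations. -/
noncomputable def graphPolynomial (L : List (ι × ι)) : MvPolynomial ι ℤ :=
  (L.map fun e ↦ MvPolynomial.X e.1 - MvPolynomial.X e.2).prod

lemma graphPolynomial_cons (e : ι × ι) (L : List (ι × ι)) :
    graphPolynomial (e :: L) =
      MvPolynomial.X e.1 * graphPolynomial L - MvPolynomial.X e.2 * graphPolynomial L := by
  simp [graphPolynomial, sub_mul]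

lemma isHomogeneous_graphPolynomial (L : List (ι × ι)) :
    (graphPolynomial L).IsHomogeneous L.length := by
  induction L with
  | nil => exact MvPolynomial.isHomogeneous_one ι ℤ
  | cons e L ih =>
    rw [graphPolynomial_cons, List.length_cons, add_comm]
    exact ((MvPolynomial.isHomogeneous_X ℤ e.1).mul ih).sub
      ((MvPolynomial.isHomogeneous_X ℤ e.2).mul ih)

/-- The coefficient of the graph polynomial of `L` at the exponent `t`, in a form that the kernel
can evaluate. -/
def graphCoeff [Fintype ι] [DecidableEq ι] : List (ι × ι) → (ι → ℕ) → ℤ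
  | [], t => if t = 0 then 1 else 0
  | e :: L, t =>
    (if t e.1 ≠ 0 then graphCoeff L (Function.update t e.1 (t e.1 - 1)) else 0) -
      (if t e.2 ≠ 0 then graphCoeff L (Function.update t e.2 (t e.2 - 1)) else 0)

lemma coeff_graphPolynomial [Fintype ι] [DecidableEq ι] (L : List (ι × ι)) (t : ι →₀ ℕ) :
    (graphPolynomial L).coeff t = graphCoeff L t := by
  induction L generalizing t with
  | nil => simp [graphPolynomial, graphCoeff, MvPolynomial.coeff_one, eq_comm]
  | cons e L ih =>
    have coe_sub_single (i : ι) :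
        ((t - Finsupp.single i 1 : ι →₀ ℕ) : ι → ℕ) = Function.update (t : ι → ℕ) i (t i - 1) := by
      ext j
      obtain rfl | hj := eq_or_ne j i
      · simp
      · simp [hj]
    simp only [graphPolynomial_cons, MvPolynomial.coeff_sub, MvPolynomial.coeff_X_mul', ih,
      coe_sub_single, Finsupp.mem_support_iff, graphCoeff]

theorem exists_listColoring_of_graphCoeff_ne_zero [Fintype ι] [DecidableEq ι] {α : Type*}
    {L : List (ι × ι)} {t : ι → ℕ} (ht : graphCoeff L t ≠ 0) (S : ι → Finset α)
    (hS : ∀ i, t i < (S i).card) :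
    ∃ c : ι → α, (∀ i, c i ∈ S i) ∧ ∀ e ∈ L, c e.1 ≠ c e.2 := by
  classical
  let t' : ι →₀ ℕ := Finsupp.equivFunOnFinite.symm t
  have hcoeff : (graphPolynomial L).coeff t' ≠ 0 := by rwa [coeff_graphPolynomial]
  have hdeg : (graphPolynomial L).totalDegree = t'.degree := by
    have hhom := isHomogeneous_graphPolynomial L
    rw [hhom.totalDegree (MvPolynomial.ne_zero_iff.2 ⟨t', hcoeff⟩), Finsupp.degree_eq_weight_one]
    exact (hhom hcoeff).symm
  obtain ⟨φ, hφ⟩ := Set.countable_iff_exists_injOn.1 (Finset.univ.biUnion S).countable_toSet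
  have hφS (i : ι) : Set.InjOn (fun a ↦ (φ a : ℤ)) (S i) := fun a ha b hb hab ↦
    hφ (Finset.mem_biUnion.2 ⟨i, Finset.mem_univ i, ha⟩)
      (Finset.mem_biUnion.2 ⟨i, Finset.mem_univ i, hb⟩) (Int.ofNat_inj.1 hab)
  obtain ⟨s, hs, hne⟩ := MvPolynomial.combinatorial_nullstellensatz_exists_eval_nonzero
    (graphPolynomial L) t' hcoeff hdeg (fun i ↦ (S i).image fun a ↦ (φ a : ℤ))
    fun i ↦ (hS i).trans_eq (Finset.card_image_of_injOn (hφS i)).symm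
  choose c hcS hcs using fun i ↦ Finset.mem_image.1 (hs i)
  refine ⟨c, hcS, fun e he hce ↦ hne ?_⟩
  rw [graphPolynomial, map_list_prod, List.map_map]
  exact List.prod_eq_zero (List.mem_map.2 ⟨e, he, by simp [← hcs, hce]⟩)

end AlonTarsi

/-- The positions of the edges meeting a 4-cycle with vertices `0, 1, 2, 3` in a graph of maximum
degree 3: `cycle i` is that of the edge joining `i` and `i + 1`, and `pendant i` that of the third
edge at `i`, if there is one. -/
inductive Slot
  | cycle (i : Fin 4)
  | pendant (i : Fin 4)
  deriving DecidableEq, Fintype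

namespace Slot

/-- The conflicts, up to symmetry, between the edges at two slots; `D i` says that the outer
endpoints of the pendant edges at the opposite vertices `i` and `i + 2` are adjacent. -/
inductive Conflict (D : Fin 4 → Prop) : Slot → Slot → Prop
  | cycle_cycle (i) : Conflict D (cycle i) (cycle (i + 2))
  | cycle_pendant_two (i) : Conflict D (cycle i) (pendant (i + 2))
  | cycle_pendant_three (i) : Conflict D (cycle i) (pendant (i + 3))
  | pendant_pendant_one (i) : Conflict D (pendant i) (pendant (i + 1))
  | pendant_pendant_two (i) : D i → Conflict D (pendant i) (pendant (i + 2))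

/-- The pairs in conflict, each listed once; the Booleans `p` and `q` say whether the
pendant edges at `0` and `2`, respectively at `1` and `3`, conflict. -/
def conflictList (p q : Bool) : List (Slot × Slot) :=
  [(cycle 0, cycle 2), (cycle 1, cycle 3)] ++
    (List.finRange 4).flatMap (fun i ↦ [(cycle i, pendant (i + 2)), (cycle i, pendant (i + 3)),
      (pendant i, pendant (i + 1))]) ++
    (if p then [(pendant 0, pendant 2)] else []) ++ if q then [(pendant 1, pendant 3)] else []

/-- The exponents of a monomial occurring in the graph polynomial of `conflictList p q`, each of
them less than the number of colors available at that slot. -/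
def exponent (p q : Bool) : Slot → ℕ
  | cycle _ => 2
  | pendant i => ![2 + p.toNat, 2 + q.toNat, 2, 0] i

lemma graphCoeff_conflictList_ne_zero (p q : Bool) :
    graphCoeff (conflictList p q) (exponent p q) ≠ 0 := by
  decide +revert +kernel

lemma exponent_pendant_lt (d : Fin 4 → Bool) (i : Fin 4) :
    exponent (d 0) (d 1) (pendant i) < 3 + (d i).toNat := by
  fin_cases i <;> simp [exponent, Nat.lt_add_right]

lemma Conflict.mem_conflictList {D : Fin 4 → Prop} [DecidablePred D] (hD : ∀ i, D (i + 2) → D i)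
    {a b : Slot} (h : Conflict D a b) :
    (a, b) ∈ conflictList (D 0) (D 1) ∨ (b, a) ∈ conflictList (D 0) (D 1) := by
  have : D 2 → D 0 := hD 0
  have : D 3 → D 1 := hD 1
  obtain i | i | i | i | ⟨i, hi⟩ := h <;> fin_cases i <;> simp_all [conflictList, List.finRange]

lemma exists_listColoring {α : Type*} {D : Fin 4 → Prop} (hD : ∀ i, D (i + 2) → D i)
    (S : Slot → Finset α) (hS : ∀ a, 3 ≤ (S a).card)
    (hSD : ∀ i, D i → 4 ≤ (S (pendant i)).card) :
    ∃ c : Slot → α, (∀ a, c a ∈ S a) ∧ ∀ a b, Conflict D a b → c a ≠ c b := by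
  classical
  have hexp : ∀ a, exponent (D 0) (D 1) a < (S a).card := by
    rintro (i | i)
    · exact hS _
    · have hpendant : 3 + (decide (D i)).toNat ≤ (S (pendant i)).card := by
        by_cases hi : D i
        · simpa [hi] using hSD i hi
        · simpa [hi] using hS (pendant i)
      exact (exponent_pendant_lt (fun i ↦ D i) i).trans_le hpendant
  obtain ⟨c, hcS, hc⟩ := exists_listColoring_of_graphCoeff_ne_zero
    (graphCoeff_conflictList_ne_zero (D 0) (D 1)) S hexp
  exact ⟨c, hcS, fun a b h ↦ (h.mem_conflictList hD).elim (hc _) fun h' ↦ (hc _ h').symm⟩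

end Slot

lemma card_add_card_le_degree {V : Type*} {G : SimpleGraph V} {v : V} [Fintype (G.neighborSet v)]
    {A B : Finset V} (hA : ∀ u ∈ A, G.Adj v u) (hB : ∀ u ∈ B, G.Adj v u) (hAB : Disjoint A B) :
    A.card + B.card ≤ G.degree v := by
  rw [← Finset.card_disjUnion _ _ hAB]
  refine Finset.card_le_card fun u hu ↦ (G.mem_neighborFinset v u).2 ?_
  exact (Finset.mem_disjUnion.1 hu).elim (hA u) (hB u)

lemma adj_spanningCoe_induce_iff {V : Type*} {G : SimpleGraph V} {s : Set V} {u v : V} :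
    (G.induce s).spanningCoe.Adj u v ↔ G.Adj u v ∧ u ∈ s ∧ v ∈ s := by
  simp

lemma cycleGraph_adj_iff_eq_add_one {n : ℕ} {i j : Fin (n + 2)} :
    (cycleGraph (n + 2)).Adj i j ↔ j = i + 1 ∨ i = j + 1 := by
  rw [cycleGraph_adj, sub_eq_iff_eq_add', sub_eq_iff_eq_add', or_comm, add_comm i, add_comm j]

section InducedCycle

variable {V : Type*} {G : SimpleGraph V} (C : cycleGraph 4 ↪g G)

lemma adj_cycle_iff {i j : Fin 4} : G.Adj (C i) (C j) ↔ j = i + 1 ∨ i = j + 1 := by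
  rw [C.map_adj_iff, cycleGraph_adj_iff_eq_add_one]

variable [DecidableEq V] [G.LocallyFinite]

/-- The neighbors of `v` outside the cycle `C`. -/
def outerNbrs (v : V) : Finset V :=
  G.neighborFinset v \ Finset.univ.image C

variable {C}

lemma mem_outerNbrs {u v : V} : u ∈ outerNbrs C v ↔ G.Adj v u ∧ u ∉ Set.range C := by
  simp [outerNbrs]

lemma card_outerNbrs_cycle_le (hdeg : ∀ v, G.degree v ≤ 3) (i : Fin 4) :
    (outerNbrs C (C i)).card ≤ 1 := by
  have hne : C (i + 1) ≠ C (i + 3) := C.injective.ne (by simp)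
  have hnbrs : ∀ u ∈ ({C (i + 1), C (i + 3)} : Finset V), G.Adj (C i) u := by
    simp only [Finset.mem_insert, Finset.mem_singleton, forall_eq_or_imp, forall_eq, adj_cycle_iff]
    grind
  have hdisj : Disjoint (outerNbrs C (C i)) {C (i + 1), C (i + 3)} := by
    rw [Finset.disjoint_left]
    intro u hu
    have hu : ∀ j, C j ≠ u := by simpa using (mem_outerNbrs.1 hu).2
    simp [(hu _).symm]
  have := card_add_card_le_degree (fun u hu ↦ (mem_outerNbrs.1 hu).1) hnbrs hdisj
  rw [Finset.card_pair hne] at this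
  have := hdeg (C i)
  omega

lemma eq_of_mem_outerNbrs_cycle (hdeg : ∀ v, G.degree v ≤ 3) {i : Fin 4} {u v : V}
    (hu : u ∈ outerNbrs C (C i)) (hv : v ∈ outerNbrs C (C i)) : u = v :=
  Finset.card_le_one.1 (card_outerNbrs_cycle_le hdeg i) u hu v hv

lemma card_outerNbrs_le (hdeg : ∀ v, G.degree v ≤ 3) {i : Fin 4} {u : V}
    (hu : G.Adj (C i) u) : (outerNbrs C u).card ≤ 2 := by
  have := card_add_card_le_degree (A := outerNbrs C u) (B := {C i})
    (fun v hv ↦ (mem_outerNbrs.1 hv).1) (by simpa using hu.symm) (by simp [mem_outerNbrs])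
  rw [Finset.card_singleton] at this
  have := hdeg u
  omega

variable (C)

/-- The edges meeting the cycle `C` that belong to a given slot. -/
def slotEdges : Slot → Set (Sym2 V)
  | .cycle i => {s(C i, C (i + 1))}
  | .pendant i => {e | ∃ u ∈ outerNbrs C (C i), e = s(C i, u)}

/-- The pendant edges at the opposite vertices `i` and `i + 2` have adjacent outer endpoints. -/
def Crossed (i : Fin 4) : Prop :=
  ∃ u ∈ outerNbrs C (C i), ∃ v ∈ outerNbrs C (C (i + 2)), G.Adj u v

/-- The edges avoiding the cycle `C` that conflict with some edge of a given slot. -/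
def blockedEdges : Slot → Finset (Sym2 V)
  | .cycle i => (outerNbrs C (C i) ∪ outerNbrs C (C (i + 1))).biUnion
      fun u ↦ (outerNbrs C u).image (s(u, ·))
  | .pendant i => (outerNbrs C (C i)).biUnion fun u ↦ (outerNbrs C u).biUnion
      fun v ↦ ((outerNbrs C v).erase u).image (s(v, ·))

variable {C}

lemma Crossed.of_add_two {i : Fin 4} (h : Crossed C (i + 2)) : Crossed C i := by
  obtain ⟨u, hu, v, hv, huv⟩ := h
  rw [show i + 2 + 2 = i by grind] at hv
  exact ⟨v, hv, u, hu, huv.symm⟩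

lemma exists_mem_slotEdges {i : Fin 4} {v : V} (h : G.Adj (C i) v) :
    ∃ a, s(C i, v) ∈ slotEdges C a := by
  by_cases hv : v ∈ Set.range C
  · obtain ⟨j, rfl⟩ := hv
    obtain rfl | rfl := (adj_cycle_iff C).1 h
    exacts [⟨.cycle i, rfl⟩, ⟨.cycle j, Sym2.eq_swap⟩]
  · exact ⟨.pendant i, v, mem_outerNbrs.2 ⟨h, hv⟩, rfl⟩

lemma mem_edgeSet_deleteCycle {e : Sym2 V}
    (he : e ∈ G.edgeSet \ ⋃ a, slotEdges C a) :
    e ∈ (G.induce (Set.range C)ᶜ).spanningCoe.edgeSet := by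
  induction e with | _ u v
  obtain ⟨huv, hslot⟩ := he
  rw [mem_edgeSet] at huv
  rw [Set.mem_iUnion] at hslot
  refine adj_spanningCoe_induce_iff.2 ⟨huv, ?_, ?_⟩
  · rintro ⟨i, rfl⟩
    exact hslot (exists_mem_slotEdges huv)
  · rintro ⟨i, rfl⟩
    rw [Sym2.eq_swap] at hslot
    exact hslot (exists_mem_slotEdges huv.symm)

lemma mem_blockedEdges_of_edgeConflict (hdeg : ∀ v, G.degree v ≤ 3) {l : Slot} {e₁ e₂ : Sym2 V}
    (h₁ : e₁ ∈ G.edgeSet ∩ slotEdges C l) (h₂ : e₂ ∈ G.edgeSet \ ⋃ m, slotEdges C m)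
    (h : EdgeConflict G e₁ e₂) : e₂ ∈ blockedEdges C l := by
  obtain ⟨a, b, c, d, rfl, rfl, hbc, hac, hbd⟩ := (edgeConflict_iff_exists_walk h₁.1 h₂.1).1 h
  obtain ⟨hcd, hc, hd⟩ := adj_spanningCoe_induce_iff.1 (mem_edgeSet_deleteCycle h₂)
  have hab := h₁.2
  have hc' : c ∈ outerNbrs C b := mem_outerNbrs.2 ⟨hbc, hc⟩
  have hd' : d ∈ outerNbrs C c := mem_outerNbrs.2 ⟨hcd, hd⟩
  cases l with
  | cycle i =>
    have hb : b = C i ∨ b = C (i + 1) := by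
      rcases Sym2.eq_iff.1 hab with h | h <;> simp [h.2]
    refine Finset.mem_biUnion.2 ⟨c, Finset.mem_union.2 ?_, Finset.mem_image_of_mem _ hd'⟩
    exact hb.imp (by rintro rfl; exact hc') (by rintro rfl; exact hc')
  | pendant i =>
    obtain ⟨u, hu, h⟩ := hab
    obtain ⟨rfl, rfl⟩ | ⟨rfl, rfl⟩ := Sym2.eq_iff.1 h
    · exact Finset.mem_biUnion.2 ⟨b, hu, Finset.mem_biUnion.2 ⟨c, hc', Finset.mem_image_of_mem _
        (Finset.mem_erase.2 ⟨hbd.symm, hd'⟩)⟩⟩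
    · exact absurd (eq_of_mem_outerNbrs_cycle hdeg hu hc') hac

lemma card_erase_outerNbrs_le (hdeg : ∀ v, G.degree v ≤ 3) {u v : V} (huv : G.Adj u v) :
    ((outerNbrs C v).erase u).card ≤ 2 := by
  have := card_add_card_le_degree (A := (outerNbrs C v).erase u) (B := {u})
    (fun w hw ↦ (mem_outerNbrs.1 (Finset.mem_of_mem_erase hw)).1) (by simpa using huv.symm)
    (by simp)
  rw [Finset.card_singleton] at this
  have := hdeg v
  omega

lemma card_blockedEdges_le (hdeg : ∀ v, G.degree v ≤ 3) (l : Slot) :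
    (blockedEdges C l).card ≤ 4 := by
  cases l with
  | cycle i =>
    have hcard : (outerNbrs C (C i) ∪ outerNbrs C (C (i + 1))).card ≤ 2 :=
      (Finset.card_union_le _ _).trans
        (add_le_add (card_outerNbrs_cycle_le hdeg _) (card_outerNbrs_cycle_le hdeg _))
    refine (Finset.card_biUnion_le_card_mul _ _ 2 fun u hu ↦ Finset.card_image_le.trans ?_).trans
      (Nat.mul_le_mul_right 2 hcard)
    exact (Finset.mem_union.1 hu).elim (fun hu ↦ card_outerNbrs_le hdeg (mem_outerNbrs.1 hu).1)
      fun hu ↦ card_outerNbrs_le hdeg (mem_outerNbrs.1 hu).1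
  | pendant i =>
    refine (Finset.card_biUnion_le_card_mul _ _ 4 fun u hu ↦ ?_).trans
      (Nat.mul_le_mul_right 4 (card_outerNbrs_cycle_le hdeg i))
    refine (Finset.card_biUnion_le_card_mul _ _ 2 fun v hv ↦ Finset.card_image_le.trans ?_).trans
      (Nat.mul_le_mul_right 2 (card_outerNbrs_le hdeg (mem_outerNbrs.1 hu).1))
    exact card_erase_outerNbrs_le hdeg (mem_outerNbrs.1 hv).1

lemma Crossed.card_blockedEdges_le {i : Fin 4} (h : Crossed C i) (hdeg : ∀ v, G.degree v ≤ 3) :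
    (blockedEdges C (.pendant i)).card ≤ 3 := by
  obtain ⟨u, hu, v, hv, huv⟩ := h
  have hsingle : outerNbrs C (C i) = {u} :=
    Finset.eq_singleton_iff_unique_mem.2 ⟨hu, fun w hw ↦ eq_of_mem_outerNbrs_cycle hdeg hw hu⟩
  have hvu : v ∈ outerNbrs C u := mem_outerNbrs.2 ⟨huv, (mem_outerNbrs.1 hv).2⟩
  have huv' : u ∈ outerNbrs C v := mem_outerNbrs.2 ⟨huv.symm, (mem_outerNbrs.1 hu).2⟩
  have hcard_u := card_outerNbrs_le hdeg (mem_outerNbrs.1 hu).1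
  have hcard_v := card_outerNbrs_le hdeg (mem_outerNbrs.1 hv).1
  calc (blockedEdges C (.pendant i)).card
      ≤ ∑ w ∈ outerNbrs C u, ((outerNbrs C w).erase u).card := by
        rw [blockedEdges, hsingle, Finset.singleton_biUnion]
        exact Finset.card_biUnion_le.trans (Finset.sum_le_sum fun w _ ↦ Finset.card_image_le)
    _ = ((outerNbrs C v).erase u).card +
          ∑ w ∈ (outerNbrs C u).erase v, ((outerNbrs C w).erase u).card :=
        (Finset.add_sum_erase _ _ hvu).symm
    _ ≤ 1 + ((outerNbrs C u).erase v).card • 2 := by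
        gcongr
        · rw [Finset.card_erase_of_mem huv']
          omega
        · exact Finset.sum_le_card_nsmul _ _ _ fun w hw ↦
            card_erase_outerNbrs_le hdeg (mem_outerNbrs.1 (Finset.mem_of_mem_erase hw)).1
    _ ≤ 3 := by
        rw [Finset.card_erase_of_mem hvu, smul_eq_mul]
        omega

lemma conflict_cycle_cycle {P : Fin 4 → Prop} {i j : Fin 4} {a b c d : V}
    (hab : s(a, b) ∈ slotEdges C (.cycle i)) (hcd : s(c, d) ∈ slotEdges C (.cycle j))
    (hbc : G.Adj b c) (hac : a ≠ c) (hbd : b ≠ d) :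
    Slot.Conflict P (.cycle i) (.cycle j) := by
  suffices j = i + 2 from this ▸ .cycle_cycle i
  obtain ⟨rfl, rfl⟩ | ⟨rfl, rfl⟩ := Sym2.eq_iff.1 hab <;>
    obtain ⟨rfl, rfl⟩ | ⟨rfl, rfl⟩ := Sym2.eq_iff.1 hcd <;>
    rw [adj_cycle_iff] at hbc <;> rw [C.injective.ne_iff] at hac hbd <;> grind

lemma not_adj_of_mem_outerNbrs (htf : G.CliqueFree 3) {u v w : V} (hu : w ∈ outerNbrs C u)
    (hv : w ∈ outerNbrs C v) : ¬ G.Adj u v := fun huv ↦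
  htf _ (is3Clique_triple_iff.2 ⟨huv, (mem_outerNbrs.1 hu).1, (mem_outerNbrs.1 hv).1⟩)

lemma conflict_cycle_pendant (htf : G.CliqueFree 3) {P : Fin 4 → Prop} {i j : Fin 4} {a b c d : V}
    (hab : s(a, b) ∈ slotEdges C (.cycle i)) (hcd : s(c, d) ∈ slotEdges C (.pendant j))
    (hbc : G.Adj b c) (hac : a ≠ c) (hbd : b ≠ d) :
    Slot.Conflict P (.cycle i) (.pendant j) := by
  suffices j = i + 2 ∨ j = i + 3 by
    obtain rfl | rfl := this
    exacts [.cycle_pendant_two i, .cycle_pendant_three i]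
  obtain ⟨p, hp, hcd⟩ := hcd
  obtain ⟨m, n, rfl, rfl, hmn⟩ :
      ∃ m n, a = C m ∧ b = C n ∧ (m = i ∧ n = i + 1 ∨ m = i + 1 ∧ n = i) := by
    obtain ⟨rfl, rfl⟩ | ⟨rfl, rfl⟩ := Sym2.eq_iff.1 hab
    exacts [⟨i, i + 1, by simp⟩, ⟨i + 1, i, by simp⟩]
  obtain ⟨rfl, rfl⟩ | ⟨rfl, rfl⟩ := Sym2.eq_iff.1 hcd
  · rw [adj_cycle_iff] at hbc
    rw [C.injective.ne_iff] at hac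
    grind
  · have hnj := not_adj_of_mem_outerNbrs htf (mem_outerNbrs.2 ⟨hbc, (mem_outerNbrs.1 hp).2⟩) hp
    rw [adj_cycle_iff] at hnj
    rw [C.injective.ne_iff] at hbd
    grind

lemma conflict_pendant_pendant (hdeg : ∀ v, G.degree v ≤ 3) {i j : Fin 4} {a b c d : V}
    (hab : s(a, b) ∈ slotEdges C (.pendant i)) (hcd : s(c, d) ∈ slotEdges C (.pendant j))
    (hbc : G.Adj b c) (hac : a ≠ c) (hbd : b ≠ d) :
    Slot.Conflict (Crossed C) (.pendant i) (.pendant j) ∨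
      Slot.Conflict (Crossed C) (.pendant j) (.pendant i) := by
  obtain ⟨u, hu, hab⟩ := hab
  obtain ⟨v, hv, hcd⟩ := hcd
  have of_adj (h : j = i + 1 ∨ i = j + 1) : Slot.Conflict (Crossed C) (.pendant i) (.pendant j) ∨
      Slot.Conflict (Crossed C) (.pendant j) (.pendant i) :=
    h.imp (by rintro rfl; exact .pendant_pendant_one i)
      (by rintro rfl; exact .pendant_pendant_one j)
  obtain ⟨rfl, rfl⟩ | ⟨rfl, rfl⟩ := Sym2.eq_iff.1 hab <;>
    obtain ⟨rfl, rfl⟩ | ⟨rfl, rfl⟩ := Sym2.eq_iff.1 hcd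
  · have hb := mem_outerNbrs.2 ⟨hbc.symm, (mem_outerNbrs.1 hu).2⟩
    exact absurd (eq_of_mem_outerNbrs_cycle hdeg hb hv) hbd
  · obtain rfl | hij | rfl : j = i ∨ (j = i + 1 ∨ i = j + 1) ∨ j = i + 2 := by grind
    · exact absurd (eq_of_mem_outerNbrs_cycle hdeg hu hv) hbc.ne
    · exact of_adj hij
    · exact .inl (.pendant_pendant_two i ⟨b, hu, c, hv, hbc⟩)
  · exact of_adj ((adj_cycle_iff C).1 hbc)
  · have hc := mem_outerNbrs.2 ⟨hbc, (mem_outerNbrs.1 hv).2⟩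
    exact absurd (eq_of_mem_outerNbrs_cycle hdeg hu hc) hac

lemma conflict_of_edgeConflict (hdeg : ∀ v, G.degree v ≤ 3) (htf : G.CliqueFree 3) {l m : Slot}
    {e₁ e₂ : Sym2 V} (h₁ : e₁ ∈ G.edgeSet ∩ slotEdges C l) (h₂ : e₂ ∈ G.edgeSet ∩ slotEdges C m)
    (h : EdgeConflict G e₁ e₂) :
    Slot.Conflict (Crossed C) l m ∨ Slot.Conflict (Crossed C) m l := by
  obtain ⟨a, b, c, d, rfl, rfl, hbc, hac, hbd⟩ := (edgeConflict_iff_exists_walk h₁.1 h₂.1).1 h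
  have hab := h₁.2
  have hcd := h₂.2
  cases l with
  | cycle i =>
    cases m with
    | cycle j => exact .inl (conflict_cycle_cycle hab hcd hbc hac hbd)
    | pendant j => exact .inl (conflict_cycle_pendant htf hab hcd hbc hac hbd)
  | pendant i =>
    cases m with
    | cycle j =>
      rw [Sym2.eq_swap] at hab hcd
      exact .inr (conflict_cycle_pendant htf hcd hab hbc.symm hbd.symm hac.symm)
    | pendant j => exact conflict_pendant_pendant hdeg hab hcd hbc hac hbd

lemma exists_slotColoring (hdeg : ∀ v, G.degree v ≤ 3) {k : ℕ} (hk : 7 ≤ k)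
    (g : Sym2 V → Fin k) :
    ∃ c : Slot → Fin k, (∀ l, ∀ e ∈ blockedEdges C l, c l ≠ g e) ∧
      ∀ l m, Slot.Conflict (Crossed C) l m → c l ≠ c m := by
  have card_available (l : Slot) : k ≤ ((blockedEdges C l).image g)ᶜ.card +
      (blockedEdges C l).card := by
    have := Finset.card_image_le (s := blockedEdges C l) (f := g)
    rw [Finset.card_compl, Fintype.card_fin]
    omega
  obtain ⟨c, hcS, hc⟩ := Slot.exists_listColoring (D := Crossed C) (fun _ ↦ Crossed.of_add_two)
    (fun l ↦ ((blockedEdges C l).image g)ᶜ)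
    (fun l ↦ by have := card_available l; have := card_blockedEdges_le (C := C) hdeg l; omega)
    (fun i hi ↦ by have := card_available (.pendant i); have := hi.card_blockedEdges_le hdeg; omega)
  refine ⟨c, fun l e he hle ↦ ?_, hc⟩
  exact Finset.mem_compl.1 (hcS l) (hle ▸ Finset.mem_image_of_mem g he)

end InducedCycle

theorem exists_isInjEdgeColoring_of_deleteCycle {V : Type*} {G : SimpleGraph V} [G.LocallyFinite]
    {C : cycleGraph 4 ↪g G} (hdeg : ∀ v, G.degree v ≤ 3) (htf : G.CliqueFree 3) {k : ℕ}
    (hk : 7 ≤ k) {g : Sym2 V → Fin k}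
    (hg : IsInjEdgeColoring (G.induce (Set.range C)ᶜ).spanningCoe g) :
    ∃ f : Sym2 V → Fin k, IsInjEdgeColoring G f := by
  classical
  obtain ⟨col, hblocked, hcol⟩ := exists_slotColoring (C := C) hdeg hk g
  refine exists_isInjEdgeColoring_of_classes (slotEdges C) col g ?_ ?_ ?_
  · intro l m e₁ h₁ e₂ h₂ h
    exact (conflict_of_edgeConflict hdeg htf h₁ h₂ h).elim (hcol l m)
      fun h' ↦ (hcol m l h').symm
  · intro l e₁ h₁ e₂ h₂ h
    exact hblocked l e₂ (mem_blockedEdges_of_edgeConflict hdeg h₁ h₂ h)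
  · intro e₁ h₁ e₂ h₂ h
    have h₁' := mem_edgeSet_deleteCycle h₁
    have h₂' := mem_edgeSet_deleteCycle h₂
    refine hg e₁ h₁' e₂ h₂' ((edgeConflict_iff_exists_walk h₁' h₂').2 ?_)
    obtain ⟨a, b, c, d, rfl, rfl, hbc, hac, hbd⟩ := (edgeConflict_iff_exists_walk h₁.1 h₂.1).1 h
    obtain ⟨-, -, hb⟩ := adj_spanningCoe_induce_iff.1 h₁'
    obtain ⟨-, hc, -⟩ := adj_spanningCoe_induce_iff.1 h₂'
    exact ⟨a, b, c, d, rfl, rfl, adj_spanningCoe_induce_iff.2 ⟨hbc, hb, hc⟩, hac, hbd⟩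

lemma exists_embedding_cycleGraph_four {V : Type*} {G : SimpleGraph V} (htf : G.CliqueFree 3)
    {w x y z : V} (hwy : w ≠ y) (hxz : x ≠ z) (hwx : G.Adj w x) (hxy : G.Adj x y)
    (hyz : G.Adj y z) (hzw : G.Adj z w) :
    ∃ C : cycleGraph 4 ↪g G, Set.range C = {w, x, y, z} := by
  classical
  have no_triangle {a b c : V} (hab : G.Adj a b) (hbc : G.Adj b c) : ¬ G.Adj a c := fun hac ↦
    htf _ (is3Clique_triple_iff.2 ⟨hab, hac, hbc⟩)
  have hwy' := no_triangle hwx hxy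
  have hxz' := no_triangle hxy hyz
  let v : Fin 4 → V := ![w, x, y, z]
  have hinj : Function.Injective v := by
    rw [← List.nodup_ofFn]
    simp [v, hwx.ne, hwy, hzw.ne', hxy.ne, hxz, hyz.ne]
  have hadj (i j : Fin 4) : G.Adj (v i) (v j) ↔ (cycleGraph 4).Adj i j := by
    rw [cycleGraph_adj_iff_eq_add_one]
    fin_cases i <;> fin_cases j <;> simp [v, hwx, hwx.symm, hxy, hxy.symm, hyz, hyz.symm, hzw,
      hzw.symm, hwy', mt Adj.symm hwy', hxz', mt Adj.symm hxz']
  refine ⟨⟨⟨v, hinj⟩, hadj _ _⟩, ?_⟩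
  change Set.range v = {w, x, y, z}
  simp only [v, Matrix.range_cons, Matrix.range_empty, Set.union_empty, Set.singleton_union]

theorem extend_coloring_C4_general {V : Type*} (G : SimpleGraph V) [G.LocallyFinite]
    (hdeg : ∀ v, G.degree v ≤ 3) (htf : G.CliqueFree 3) {k : ℕ} (hk : 7 ≤ k)
    {w x y z : V} (hwy : w ≠ y) (hxz : x ≠ z)
    (hwx : G.Adj w x) (hxy : G.Adj x y) (hyz : G.Adj y z) (hzw : G.Adj z w)
    (hcol : ∃ f : Sym2 (({w, x, y, z}ᶜ : Set V)) → Fin k,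
      IsInjEdgeColoring (G.induce ({w, x, y, z}ᶜ : Set V)) f) :
    ∃ f : Sym2 V → Fin k, IsInjEdgeColoring G f := by
  have : NeZero k := ⟨by omega⟩
  obtain ⟨C, hC⟩ := exists_embedding_cycleGraph_four htf hwy hxz hwx hxy hyz hzw
  rw [← hC] at hcol
  obtain ⟨f, hf⟩ := hcol
  obtain ⟨g, hg⟩ := hf.exists_map (Function.Embedding.subtype _)
  exact exists_isInjEdgeColoring_of_deleteCycle hdeg htf hk hg

/-- Deleting a 4-cycle `w x y z` from a 3-regular triangle-free graph with no copy of
`K_{2,3}`: if `H - {w,x,y,z}` has an injective edge-coloring with 7 colors, then so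
does `H`. -/
theorem extend_coloring_C4 {V : Type*} [Fintype V] (H : SimpleGraph V)
    [DecidableRel H.Adj] (hreg : ∀ a : V, H.degree a = 3) (htf : H.CliqueFree 3)
    (hK23 : ¬ ∃ x y z u v : V, (x ≠ y ∧ x ≠ z ∧ y ≠ z ∧ u ≠ v) ∧
      H.Adj x u ∧ H.Adj x v ∧ H.Adj y u ∧ H.Adj y v ∧ H.Adj z u ∧ H.Adj z v)
    (w x y z : V) (hwx : w ≠ x) (hwy : w ≠ y) (hwz : w ≠ z) (hxy : x ≠ y)
    (hxz : x ≠ z) (hyz : y ≠ z)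
    (c₁ : H.Adj w x) (c₂ : H.Adj x y) (c₃ : H.Adj y z) (c₄ : H.Adj z w)
    (hcol : ∃ f : Sym2 (({w, x, y, z}ᶜ : Set V)) → Fin 7,
      IsInjEdgeColoring (H.induce ({w, x, y, z}ᶜ : Set V)) f) :
    ∃ f : Sym2 V → Fin 7, IsInjEdgeColoring H f := by
  exact extend_coloring_C4_general H (fun a ↦ (hreg a).le) htf le_rfl hwy hxz c₁ c₂ c₃ c₄ hcol
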